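/- arXiv:0912.1518 — 2 statements merged into one kernel-verified Lean document; each statement's English description precedes it below -/
import Mathlib

section
/- Let m_1, l_2, m_2 be positive integers with m_1 < l_2 ≤ m_2. Then f([1,m_1] ∪ [l_2,m_2]) = Σ_{d=1}^{m_2} μ(d) · (2^{⌊m_1/d⌋ + ⌊m_2/d⌋ − ⌊(l_2−1)/d⌋} − 1). -/
/-!
Detect `gcd X = 1` by `∑ d ∣ gcd X, μ d`. After exchanging the sums, the coefficient of `μ d` counts
the nonempty subsets of `A` all of whose elements are multiples of `d`, that is, the nonempty
subsets of the multiples of `d` in `A`; for an interval `(a, b]` there are `⌊b / d⌋ - ⌊a / d⌋` such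
multiples.
-/

open Finset
open scoped ArithmeticFunction.Moebius

lemma sum_moebius_Icc_filter_dvd {n N : ℕ} (hn : n ≠ 0) (hnN : n ≤ N) :
    ∑ d ∈ Icc 1 N with d ∣ n, μ d = if n = 1 then 1 else 0 := by
  have filter_eq_divisors : {d ∈ Icc 1 N | d ∣ n} = n.divisors := by
    ext d
    simp only [mem_filter, mem_Icc, Nat.mem_divisors]
    exact ⟨fun h ↦ ⟨h.2, hn⟩, fun h ↦ ⟨⟨Nat.pos_of_dvd_of_pos h.1 hn.pos,
      (Nat.le_of_dvd hn.pos h.1).trans hnN⟩, h.1⟩⟩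
  rw [filter_eq_divisors, ← ArithmeticFunction.coe_mul_zeta_apply,
    ArithmeticFunction.moebius_mul_coe_zeta, ArithmeticFunction.one_apply]

lemma card_filter_eq_one_eq_sum_moebius {ι : Type*} {s : Finset ι} {g : ι → ℕ} {N : ℕ}
    (hg : ∀ i ∈ s, g i ∈ Icc 1 N) :
    (#{i ∈ s | g i = 1} : ℤ) = ∑ d ∈ Icc 1 N, μ d * #{i ∈ s | d ∣ g i} := by
  calc (#{i ∈ s | g i = 1} : ℤ)
      = ∑ i ∈ s, if g i = 1 then 1 else 0 := (sum_boole _ _).symm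
    _ = ∑ i ∈ s, ∑ d ∈ Icc 1 N, if d ∣ g i then μ d else 0 := by
      refine sum_congr rfl fun i hi ↦ ?_
      obtain ⟨h_pos, h_le⟩ := mem_Icc.mp (hg i hi)
      rw [← sum_moebius_Icc_filter_dvd (Nat.ne_of_gt h_pos) h_le, sum_filter]
    _ = ∑ d ∈ Icc 1 N, ∑ i ∈ s, if d ∣ g i then μ d else 0 := sum_comm
    _ = ∑ d ∈ Icc 1 N, μ d * #{i ∈ s | d ∣ g i} := by
      refine sum_congr rfl fun d _ ↦ ?_
      rw [← sum_filter, sum_const, nsmul_eq_mul, mul_comm]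

lemma card_filter_powerset_nonempty_forall {ι : Type*} (s : Finset ι) (p : ι → Prop)
    [DecidablePred p] :
    #{t ∈ s.powerset | t.Nonempty ∧ ∀ i ∈ t, p i} = 2 ^ #{i ∈ s | p i} - 1 := by
  classical
  have filter_eq_erase :
      {t ∈ s.powerset | t.Nonempty ∧ ∀ i ∈ t, p i} = {i ∈ s | p i}.powerset.erase ∅ := by
    ext t
    simp only [mem_filter, mem_powerset, mem_erase, subset_iff, nonempty_iff_ne_empty]
    grind
  rw [filter_eq_erase, card_erase_of_mem (empty_mem_powerset _), card_powerset]

lemma gcd_mem_Icc_one_of_mem {ι : Type*} {s : Finset ι} {f : ι → ℕ} {i : ι} {N : ℕ} (hi : i ∈ s)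
    (hfi : f i ∈ Icc 1 N) : s.gcd f ∈ Icc 1 N := by
  obtain ⟨h_pos, h_le⟩ := mem_Icc.mp hfi
  have gcd_dvd_f : s.gcd f ∣ f i := gcd_dvd hi
  exact mem_Icc.mpr ⟨Nat.pos_of_dvd_of_pos gcd_dvd_f h_pos,
    (Nat.le_of_dvd h_pos gcd_dvd_f).trans h_le⟩

theorem card_filter_powerset_nonempty_gcd_eq_one {ι : Type*} {s : Finset ι} {f : ι → ℕ} {N : ℕ}
    (hf : ∀ i ∈ s, f i ∈ Icc 1 N) :
    (#{t ∈ s.powerset | t.Nonempty ∧ t.gcd f = 1} : ℤ)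
      = ∑ d ∈ Icc 1 N, μ d * (2 ^ #{i ∈ s | d ∣ f i} - 1) := by
  have gcd_mem : ∀ t ∈ {t ∈ s.powerset | t.Nonempty}, t.gcd f ∈ Icc 1 N := fun t ht ↦ by
    obtain ⟨ht_sub, i, hi⟩ := mem_filter.mp ht
    exact gcd_mem_Icc_one_of_mem hi (hf i (mem_powerset.mp ht_sub hi))
  rw [← filter_filter, card_filter_eq_one_eq_sum_moebius gcd_mem]
  refine sum_congr rfl fun d _ ↦ ?_
  simp only [filter_filter, Finset.dvd_gcd_iff]
  rw [card_filter_powerset_nonempty_forall, Nat.cast_pred (by positivity)]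
  norm_cast

lemma card_Ioc_filter_dvd (a b d : ℕ) : #{x ∈ Ioc a b | d ∣ x} = b / d - a / d := by
  obtain hab | hba := le_total a b
  · have disjoint_filters : Disjoint {x ∈ Ioc 0 a | d ∣ x} {x ∈ Ioc a b | d ∣ x} :=
      disjoint_filter_filter (Ioc_disjoint_Ioc_of_le le_rfl)
    have card_add : a / d + #{x ∈ Ioc a b | d ∣ x} = b / d := by
      rw [← Nat.Ioc_filter_dvd_card_eq_div a, ← Nat.Ioc_filter_dvd_card_eq_div b,
        ← card_union_of_disjoint disjoint_filters, ← filter_union,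
        Ioc_union_Ioc_eq_Ioc a.zero_le hab]
    exact Nat.eq_sub_of_add_eq' card_add
  · rw [Ioc_eq_empty_of_le hba, filter_empty, card_empty,
      Nat.sub_eq_zero_of_le (Nat.div_le_div_right hba)]

lemma card_Ioc_union_Ioc_filter_dvd {a b c e : ℕ} (hbc : b ≤ c) (d : ℕ) :
    #{x ∈ Ioc a b ∪ Ioc c e | d ∣ x} = (b / d - a / d) + (e / d - c / d) := by
  rw [filter_union, card_union_of_disjoint
    (disjoint_filter_filter (Ioc_disjoint_Ioc_of_le hbc)),
    card_Ioc_filter_dvd, card_Ioc_filter_dvd]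

/-- Theorem (special case): `f([1,m₁] ∪ [l₂,m₂]) =
∑_{d=1}^{m₂} μ(d) (2^{⌊m₁/d⌋ + ⌊m₂/d⌋ - ⌊(l₂-1)/d⌋} - 1)`, where `f(A)` counts
the nonempty relatively prime subsets of `A`. -/
theorem stmt_7 (m₁ l₂ m₂ : ℕ) (hm₁ : 0 < m₁) (h₁ : m₁ < l₂) (h₂ : l₂ ≤ m₂) :
    ((((Finset.Icc 1 m₁ ∪ Finset.Icc l₂ m₂).powerset).filter
        (fun X : Finset ℕ => X.Nonempty ∧ X.gcd id = 1)).card : ℤ)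
      = ∑ d ∈ Finset.Icc 1 m₂,
          (ArithmeticFunction.moebius d) *
            (2 ^ (m₁ / d + m₂ / d - (l₂ - 1) / d) - 1) := by
  have mem_Icc_one : ∀ x ∈ Icc 1 m₁ ∪ Icc l₂ m₂, id x ∈ Icc 1 m₂ := fun x hx ↦ by
    simp only [mem_union, mem_Icc, id] at hx ⊢
    omega
  have union_eq : Icc 1 m₁ ∪ Icc l₂ m₂ = Ioc 0 m₁ ∪ Ioc (l₂ - 1) m₂ := by
    ext x
    simp only [mem_union, mem_Icc, mem_Ioc]
    omega
  rw [card_filter_powerset_nonempty_gcd_eq_one mem_Icc_one]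
  refine sum_congr rfl fun d _ ↦ ?_
  have div_le_div : (l₂ - 1) / d ≤ m₂ / d := Nat.div_le_div_right (by omega)
  simp only [id, union_eq]
  rw [card_Ioc_union_Ioc_filter_dvd (Nat.le_sub_one_of_lt h₁), Nat.zero_div, Nat.sub_zero,
    ← Nat.add_sub_assoc div_le_div]
end

section
/- For every integer n > 3, Σ_{d=1}^{n} μ(d) · 2^{⌊n/d⌋ − ⌊(n−3)/d⌋} equals 3 + M(n) if n is even, and equals 4 + M(n) if n is odd. -/
/-! The exponent `n / d - (n - 3) / d` counts the multiples of `d` in `A = {n - 2, n - 1, n}`, so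
the power of two counts the subsets `S ⊆ A` all of whose elements are divisible by `d`, i.e. with
`d ∣ gcd S`. After exchanging the sums, a nonempty `S` contributes
`∑ d ∣ gcd S, μ d = [gcd S = 1]`, while `S = ∅` contributes the Mertens function. It remains to
count the relatively prime subsets of three consecutive integers. -/

open Finset

open scoped ArithmeticFunction.Moebius

/-- The nonempty subsets of `A` with greatest common divisor `1`; the empty set is left out
automatically because its `Finset.gcd` is `0`. -/
def relPrimeSubsets (A : Finset ℕ) : Finset (Finset ℕ) :=
  {S ∈ A.powerset | S.gcd id = 1}

theorem card_filter_dvd_Ioc (m n d : ℕ) : #{k ∈ Ioc m n | d ∣ k} = n / d - m / d := by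
  obtain hnm | hmn := le_total n m
  · simp [Ioc_eq_empty_of_le hnm, Nat.sub_eq_zero_of_le (Nat.div_le_div_right hnm)]
  have hunion : #{k ∈ Ioc 0 n | d ∣ k} = #{k ∈ Ioc 0 m | d ∣ k} + #{k ∈ Ioc m n | d ∣ k} := by
    rw [← Ioc_union_Ioc_eq_Ioc m.zero_le hmn, filter_union,
      card_union_of_disjoint (disjoint_filter_filter (Ioc_disjoint_Ioc_of_le le_rfl))]
  simp only [Nat.Ioc_filter_dvd_card_eq_div] at hunion
  omega

theorem two_pow_card_filter_dvd {α : Type*} [CommMonoidWithZero α] [NormalizedGCDMonoid α]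
    (A : Finset α) (d : α) [DecidablePred (d ∣ ·)] :
    2 ^ #{a ∈ A | d ∣ a} = #{S ∈ A.powerset | d ∣ S.gcd id} := by
  rw [← card_powerset]
  congr 1
  ext S
  simp only [mem_powerset, mem_filter, subset_iff, Finset.dvd_gcd_iff, id, forall₂_and]

theorem sum_moebius_filter_dvd {n k : ℕ} (hk : k ∈ Icc 1 n) :
    ∑ d ∈ Icc 1 n with d ∣ k, μ d = if k = 1 then 1 else 0 := by
  obtain ⟨hk_pos, hkn⟩ := mem_Icc.mp hk
  have hdivisors : {d ∈ Icc 1 n | d ∣ k} = k.divisors := by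
    ext d
    simp only [mem_filter, mem_Icc, Nat.mem_divisors]
    exact ⟨fun h ↦ ⟨h.2, Nat.ne_of_gt hk_pos⟩, fun h ↦
      ⟨⟨Nat.pos_of_dvd_of_pos h.1 hk_pos, (Nat.le_of_dvd hk_pos h.1).trans hkn⟩, h.1⟩⟩
  rw [hdivisors, ← ArithmeticFunction.coe_zeta_mul_apply,
    ArithmeticFunction.coe_zeta_mul_moebius, ArithmeticFunction.one_apply]

theorem gcd_id_mem_Icc {n : ℕ} {S : Finset ℕ} (hS : S.Nonempty) (hSn : S ⊆ Icc 1 n) :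
    S.gcd id ∈ Icc 1 n := by
  obtain ⟨a, ha⟩ := hS
  have hdvd : S.gcd id ∣ a := gcd_dvd ha
  obtain ⟨ha_pos, han⟩ := mem_Icc.mp (hSn ha)
  exact mem_Icc.mpr ⟨Nat.pos_of_dvd_of_pos hdvd ha_pos, (Nat.le_of_dvd ha_pos hdvd).trans han⟩

theorem sum_moebius_mul_two_pow_card_filter_dvd {n : ℕ} {A : Finset ℕ} (hA : A ⊆ Icc 1 n) :
    ∑ d ∈ Icc 1 n, μ d * 2 ^ #{a ∈ A | d ∣ a} =
      #(relPrimeSubsets A) + ∑ d ∈ Icc 1 n, μ d := by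
  have hsubset (S : Finset ℕ) (hS : S ∈ A.powerset) : ∑ d ∈ Icc 1 n with d ∣ S.gcd id, μ d =
      (if S.gcd id = 1 then 1 else 0) + if S = ∅ then ∑ d ∈ Icc 1 n, μ d else 0 := by
    obtain rfl | hne := S.eq_empty_or_nonempty
    · simp
    · rw [if_neg hne.ne_empty, add_zero]
      exact sum_moebius_filter_dvd
        (gcd_id_mem_Icc hne ((mem_powerset.mp hS).trans hA))
  calc ∑ d ∈ Icc 1 n, μ d * 2 ^ #{a ∈ A | d ∣ a}
      = ∑ d ∈ Icc 1 n, ∑ S ∈ A.powerset with d ∣ S.gcd id, μ d := by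
        refine sum_congr rfl fun d _ ↦ ?_
        rw [sum_const, ← two_pow_card_filter_dvd, nsmul_eq_mul, mul_comm, Nat.cast_pow,
          Nat.cast_ofNat]
    _ = ∑ S ∈ A.powerset, ∑ d ∈ Icc 1 n with d ∣ S.gcd id, μ d := by
        simp only [sum_filter]
        exact sum_comm
    _ = #(relPrimeSubsets A) + ∑ d ∈ Icc 1 n, μ d := by
        rw [sum_congr rfl hsubset, sum_add_distrib, sum_boole, sum_ite_eq',
          if_pos (empty_mem_powerset A), relPrimeSubsets]

theorem sum_moebius_mul_two_pow_div_sub_div (m n : ℕ) :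
    ∑ d ∈ Icc 1 n, μ d * 2 ^ (n / d - m / d) =
      #(relPrimeSubsets (Ioc m n)) + ∑ d ∈ Icc 1 n, μ d := by
  have hsub : Ioc m n ⊆ Icc 1 n := fun k hk ↦
    mem_Icc.mpr ⟨Nat.one_le_of_lt (mem_Ioc.mp hk).1, (mem_Ioc.mp hk).2⟩
  simp only [← card_filter_dvd_Ioc, sum_moebius_mul_two_pow_card_filter_dvd hsub]

theorem sum_powerset_triple {α M : Type*} [DecidableEq α] [AddCommMonoid M] {a b c : α}
    (hab : a ≠ b) (hac : a ≠ c) (hbc : b ≠ c) (f : Finset α → M) :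
    ∑ S ∈ ({a, b, c} : Finset α).powerset, f S =
      f ∅ + f {c} + (f {b} + f {b, c}) + (f {a} + f {a, c} + (f {a, b} + f {a, b, c})) := by
  have ha : a ∉ insert b (insert c (∅ : Finset α)) := by simp [hab, hac]
  have hb : b ∉ insert c (∅ : Finset α) := by simp [hbc]
  rw [← insert_empty_eq c]
  simp only [sum_powerset_insert ha, sum_powerset_insert hb, sum_powerset_insert (notMem_empty c),
    powerset_empty, sum_singleton]
  simp only [insert_empty_eq]

theorem card_relPrimeSubsets_triple {a b c : ℕ} (ha : a ≠ 1) (hb : b ≠ 1) (hc : c ≠ 1)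
    (hac : a ≠ c) (hcop_ab : a.Coprime b) (hcop_bc : b.Coprime c) :
    #(relPrimeSubsets {a, b, c}) = if a.Coprime c then 4 else 3 := by
  have hab : a ≠ b := by
    rintro rfl
    exact ha ((Nat.coprime_self a).mp hcop_ab)
  have hbc : b ≠ c := by
    rintro rfl
    exact hb ((Nat.coprime_self b).mp hcop_bc)
  have hgcd_ab : a.gcd b = 1 := hcop_ab
  have hgcd_bc : b.gcd c = 1 := hcop_bc
  rw [relPrimeSubsets, card_filter, sum_powerset_triple hab hac hbc]
  simp only [gcd_insert, gcd_singleton, gcd_empty, gcd_eq_nat_gcd, id, normalize_eq,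
    ha, hb, hc, hgcd_ab, hgcd_bc, Nat.gcd_one_right, zero_ne_one, if_true, if_false,
    Nat.coprime_iff_gcd_eq_one]
  split_ifs <;> rfl

theorem coprime_self_add_two_iff {k : ℕ} : k.Coprime (k + 2) ↔ ¬ Even k := by
  rw [Nat.coprime_self_add_right, Nat.coprime_two_right, Nat.not_even_iff_odd]

theorem card_relPrimeSubsets_three_consecutive {k : ℕ} (hk : 1 < k) :
    #(relPrimeSubsets {k, k + 1, k + 2}) = if Even k then 3 else 4 := by
  have hcop_succ (j : ℕ) : j.Coprime (j + 1) :=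
    Nat.coprime_self_add_right.mpr j.coprime_one_right
  rw [card_relPrimeSubsets_triple (by omega) (by omega) (by omega) (by omega)
    (hcop_succ k) (hcop_succ (k + 1)), if_congr coprime_self_add_two_iff rfl rfl, ite_not]

/-- For `n > 3`: `∑_{d=1}^{n} μ(d) 2^{⌊n/d⌋ - ⌊(n-3)/d⌋}` equals `3 + M(n)` if `n`
is even and `4 + M(n)` if `n` is odd, where `M` is the Mertens function. -/
theorem stmt_14 (n : ℕ) (hn : 3 < n) :
    ∑ d ∈ Finset.Icc 1 n,
        (ArithmeticFunction.moebius d) * 2 ^ (n / d - (n - 3) / d)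
      = (if Even n then 3 else 4) + ∑ d ∈ Finset.Icc 1 n, (ArithmeticFunction.moebius d : ℤ) := by
  obtain ⟨k, rfl⟩ : ∃ k, n = k + 2 := ⟨n - 2, by omega⟩
  have hIoc : Ioc (k + 2 - 3) (k + 2) = {k, k + 1, k + 2} := by
    ext j
    simp only [mem_Ioc, mem_insert, mem_singleton]
    omega
  have hparity : Even (k + 2) ↔ Even k := by simp [Nat.even_add]
  rw [sum_moebius_mul_two_pow_div_sub_div, hIoc,
    card_relPrimeSubsets_three_consecutive (by omega)]
  simp only [hparity, Nat.cast_ite, Nat.cast_ofNat]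
end
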